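/- Let g, h, i be the permutations of {0,…,12} given in cycle notation by g = (0 2)(1 7)(3 6)(5 10), h = (0 6)(3 8)(9 5)(2 4), i = (0 5)(9 11)(1 2)(6 12), and g' = (0 7)(3 11)(6 8)(9 12), h' = (0 8)(9 7)(5 11)(1 10), i' = (0 11)(1 8)(2 7)(3 4). Let G be the subgroup of Sym(13) × Sym(13) generated by (g,g'), (h,h'), (i,i'), and let A = {(σ,τ) ∈ G : σ(0) = 0}, B = {(σ,τ) ∈ G : τ(0) = 0}. Then for every (σ,τ) ∈ G the number of fixed points of σ equals the number of fixed points of τ; A and B are Gassmann equivalent subgroups of G of index 13; and A and B are not conjugate in G. -/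

import Mathlib

open Equiv

/-- g = (0 2)(1 7)(3 6)(5 10) -/
def g : Perm (Fin 13) := swap 0 2 * swap 1 7 * swap 3 6 * swap 5 10
/-- h = (0 6)(3 8)(9 5)(2 4) -/
def h : Perm (Fin 13) := swap 0 6 * swap 3 8 * swap 9 5 * swap 2 4
/-- i = (0 5)(9 11)(1 2)(6 12) -/
def i : Perm (Fin 13) := swap 0 5 * swap 9 11 * swap 1 2 * swap 6 12
/-- g' = (0 7)(3 11)(6 8)(9 12) -/
def g' : Perm (Fin 13) := swap 0 7 * swap 3 11 * swap 6 8 * swap 9 12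
/-- h' = (0 8)(9 7)(5 11)(1 10) -/
def h' : Perm (Fin 13) := swap 0 8 * swap 9 7 * swap 5 11 * swap 1 10
/-- i' = (0 11)(1 8)(2 7)(3 4) -/
def i' : Perm (Fin 13) := swap 0 11 * swap 1 8 * swap 2 7 * swap 3 4

/-- The subgroup of Sym(13) × Sym(13) generated by (g,g'), (h,h'), (i,i'). -/
def G₀ : Subgroup (Perm (Fin 13) × Perm (Fin 13)) :=
  Subgroup.closure {(g, g'), (h, h'), (i, i')}

/-- A = {(σ,τ) ∈ G₀ : σ 0 = 0}, the point stabilizer in the first action. -/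
def A : Subgroup G₀ where
  carrier := {g | (g : Perm (Fin 13) × Perm (Fin 13)).1 0 = 0}
  one_mem' := rfl
  mul_mem' := by
    intro x y hx hy
    simp only [Set.mem_setOf_eq] at *
    simp [Subgroup.coe_mul, Perm.mul_apply, hx, hy]
  inv_mem' := by
    intro x hx
    simp only [Set.mem_setOf_eq] at *
    conv_lhs => rw [← hx]
    simp

/-- B = {(σ,τ) ∈ G₀ : τ 0 = 0}, the point stabilizer in the second action. -/
def B : Subgroup G₀ where
  carrier := {g | (g : Perm (Fin 13) × Perm (Fin 13)).2 0 = 0}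
  one_mem' := rfl
  mul_mem' := by
    intro x y hx hy
    simp only [Set.mem_setOf_eq] at *
    simp [Subgroup.coe_mul, Perm.mul_apply, hx, hy]
  inv_mem' := by
    intro x hx
    simp only [Set.mem_setOf_eq] at *
    conv_lhs => rw [← hx]
    simp

/-- The incidence relation of the projective plane of order 3, via the difference set 0,1,3,9. -/
def Inc (x y : Fin 13) : Prop := x + y = 0 ∨ x + y = 1 ∨ x + y = 3 ∨ x + y = 9

instance (x y : Fin 13) : Decidable (Inc x y) := by unfold Inc; infer_instance

/-- Incidence matrix. -/
def incN (x y : Fin 13) : ℤ := if Inc x y then 1 else 0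

/-- Twelve times the inverse transpose of the incidence matrix. -/
def incM (x y : Fin 13) : ℤ := if Inc x y then 3 else -1

theorem inc_row : ∀ x z : Fin 13, ∑ y, incN x y * incM z y = if z = x then 12 else 0 := by
  decide +kernel

theorem inc_col : ∀ y w : Fin 13, ∑ x, incN x y * incM x w = if y = w then 12 else 0 := by
  decide +kernel

theorem inc_inv (p : Perm (Fin 13) × Perm (Fin 13)) (hp : p ∈ G₀) :
    ∀ x y, Inc (p.1 x) (p.2 y) ↔ Inc x y := by
  unfold G₀ at hp
  induction hp using Subgroup.closure_induction with
  | mem p hp =>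
    rcases hp with rfl | rfl | rfl
    · decide +kernel
    · decide +kernel
    · decide +kernel
  | one => intro x y; rfl
  | mul a b _ _ ha hb => intro x y; simp [ha, hb]
  | inv a _ ha =>
    intro x y
    rw [← ha]; simp

theorem fix_eq (p : Perm (Fin 13) × Perm (Fin 13)) (hp : p ∈ G₀) :
    Fintype.card {x : Fin 13 // p.1 x = x} = Fintype.card {x : Fin 13 // p.2 x = x} := by
  have hM : ∀ x y, incM (p.1 x) (p.2 y) = incM x y := by
    intro x y; simp [incM, inc_inv p hp]
  have h1 : ∑ x, ∑ y, incN x (p.2 y) * incM (p.1 x) (p.2 y) =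
      12 * (Fintype.card {x : Fin 13 // p.1 x = x} : ℤ) := by
    have : ∀ x, ∑ y, incN x (p.2 y) * incM (p.1 x) (p.2 y) = if p.1 x = x then 12 else 0 := by
      intro x
      rw [Equiv.sum_comp p.2 (fun y => incN x y * incM (p.1 x) y), inc_row]
    rw [Fintype.sum_congr _ _ this, Finset.sum_ite, Fintype.card_subtype]
    simp [mul_comm]
  have h2 : ∑ x, ∑ y, incN x (p.2 y) * incM (p.1 x) (p.2 y) =
      12 * (Fintype.card {x : Fin 13 // p.2 x = x} : ℤ) := by
    rw [Finset.sum_comm]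
    have : ∀ y, ∑ x, incN x (p.2 y) * incM (p.1 x) (p.2 y) = if p.2 y = y then 12 else 0 := by
      intro y
      simp only [hM]
      rw [inc_col]
    rw [Fintype.sum_congr _ _ this, Finset.sum_ite, Fintype.card_subtype]
    simp [mul_comm]
  have := h1.symm.trans h2
  omega

/-- The generators as elements of the group. -/
def gg : G₀ := ⟨(g, g'), Subgroup.subset_closure (by simp)⟩
/-- Second generator. -/
def hh : G₀ := ⟨(h, h'), Subgroup.subset_closure (by simp)⟩
/-- Third generator. -/
def ii : G₀ := ⟨(i, i'), Subgroup.subset_closure (by simp)⟩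

/-- First coordinate action. -/
def act1 : G₀ →* Perm (Fin 13) := (MonoidHom.fst _ _).comp G₀.subtype
/-- Second coordinate action. -/
def act2 : G₀ →* Perm (Fin 13) := (MonoidHom.snd _ _).comp G₀.subtype

theorem trans1 : ∀ x : Fin 13, ∃ t : G₀, act1 t 0 = x := by
  have key : ∀ x : Fin 13, ∃ t ∈ ([1, gg, hh, ii, hh * gg, ii * gg, gg * hh, ii * hh, gg * ii,
      hh * ii, gg * ii * gg, hh * gg * hh, ii * hh * ii] : List G₀), act1 t 0 = x := by
    decide +kernel
  intro x
  obtain ⟨t, _, ht⟩ := key x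
  exact ⟨t, ht⟩

theorem trans2 : ∀ x : Fin 13, ∃ t : G₀, act2 t 0 = x := by
  have key : ∀ x : Fin 13, ∃ t ∈ ([1, gg, hh, ii, hh * gg, ii * gg, gg * hh, ii * hh, gg * ii,
      hh * ii, gg * hh * gg, hh * ii * hh, ii * gg * ii] : List G₀), act2 t 0 = x := by
    decide +kernel
  intro x
  obtain ⟨t, _, ht⟩ := key x
  exact ⟨t, ht⟩

theorem word1 : act1 (gg * hh * gg * hh * gg) 0 = 0 := by decide +kernel

theorem word2 : act1 (gg * ii * gg * ii * gg * hh * ii * gg) 0 = 0 := by decide +kernel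

theorem no_common_fix : ∀ y : Fin 13, act2 (gg * hh * gg * hh * gg) y = y →
    ¬ act2 (gg * ii * gg * ii * gg * hh * ii * gg) y = y := by
  decide +kernel

theorem index_13 {G : Type*} [Group G] (φ : G →* Perm (Fin 13)) (S : Subgroup G)
    (hS : ∀ x, x ∈ S ↔ φ x 0 = 0) (ht : ∀ x, ∃ t, φ t 0 = x) : S.index = 13 := by
  letI := MulAction.compHom (Fin 13) φ
  have hsm : ∀ (t : G) (x : Fin 13), t • x = φ t x := fun _ _ => rfl
  haveI : MulAction.IsPretransitive G (Fin 13) := by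
    constructor
    intro x y
    obtain ⟨s, rfl⟩ := ht x
    obtain ⟨t, rfl⟩ := ht y
    exact ⟨t * s⁻¹, by simp [hsm]⟩
  have : S = MulAction.stabilizer G (0 : Fin 13) := by
    ext x
    rw [hS, MulAction.mem_stabilizer_iff, hsm]
  rw [this, MulAction.index_stabilizer_of_transitive]
  simp

open Classical in
theorem class_count {G : Type*} [Group G] [Fintype G] (φ : G →* Perm (Fin 13))
    (ht : ∀ x, ∃ t, φ t 0 = x) (c : G) :
    13 * (Finset.univ.filter fun x : G => φ x 0 = 0 ∧ IsConj c x).card =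
      ∑ x ∈ Finset.univ.filter (fun x : G => IsConj c x),
        Fintype.card {j : Fin 13 // φ x j = j} := by
  have hj : ∀ j : Fin 13, (Finset.univ.filter fun x : G => φ x j = j ∧ IsConj c x).card =
      (Finset.univ.filter fun x : G => φ x 0 = 0 ∧ IsConj c x).card := by
    intro j
    obtain ⟨t, rfl⟩ := ht j
    symm
    refine Finset.card_bij (fun x _ => t * x * t⁻¹) ?_ ?_ ?_
    · intro x hx
      simp only [Finset.mem_filter, Finset.mem_univ, true_and] at hx ⊢
      refine ⟨by simp [hx.1], hx.2.trans ?_⟩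
      exact isConj_iff.2 ⟨t, rfl⟩
    · intro x _ y _ hxy
      simpa using hxy
    · intro y hy
      simp only [Finset.mem_filter, Finset.mem_univ, true_and] at hy
      refine ⟨t⁻¹ * y * t, ?_, by group⟩
      simp only [Finset.mem_filter, Finset.mem_univ, true_and]
      refine ⟨by simp [hy.1], hy.2.trans ?_⟩
      exact isConj_iff.2 ⟨t⁻¹, by simp⟩
  calc _ = ∑ j : Fin 13, (Finset.univ.filter fun x : G => φ x j = j ∧ IsConj c x).card := by
        simp [hj, -isConj_iff]
    _ = _ := by
        simp only [Fintype.card_subtype, Finset.card_filter]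
        rw [Finset.sum_comm, Finset.sum_filter]
        refine Finset.sum_congr rfl fun x _ => ?_
        by_cases hx : IsConj c x <;> simp [hx, -isConj_iff]

open Classical in
theorem class_eq {G : Type*} [Group G] [Fintype G] (φ ψ : G →* Perm (Fin 13))
    (hφ : ∀ x, ∃ t, φ t 0 = x) (hψ : ∀ x, ∃ t, ψ t 0 = x)
    (hfix : ∀ x, Fintype.card {j : Fin 13 // φ x j = j} = Fintype.card {j : Fin 13 // ψ x j = j})
    (S T : Subgroup G) (hS : ∀ x, x ∈ S ↔ φ x 0 = 0) (hT : ∀ x, x ∈ T ↔ ψ x 0 = 0) (c : G) :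
    Nat.card ((S : Set G) ∩ {x : G | IsConj c x} : Set G) =
      Nat.card ((T : Set G) ∩ {x : G | IsConj c x} : Set G) := by
  have h1 := class_count φ hφ c
  have h2 := class_count ψ hψ c
  simp only [hfix] at h1
  have h4 := h1.trans h2.symm
  have e1 : Nat.card ((S : Set G) ∩ {x : G | IsConj c x} : Set G) =
      (Finset.univ.filter fun x : G => φ x 0 = 0 ∧ IsConj c x).card := by
    rw [Nat.card_coe_set_eq, ← Set.ncard_coe_finset]
    congr 1
    ext x
    simp [hS]
  have e2 : Nat.card ((T : Set G) ∩ {x : G | IsConj c x} : Set G) =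
      (Finset.univ.filter fun x : G => ψ x 0 = 0 ∧ IsConj c x).card := by
    rw [Nat.card_coe_set_eq, ← Set.ncard_coe_finset]
    congr 1
    ext x
    simp [hT]
  rw [e1, e2]
  omega

/-- Every element of `G₀` has equally many fixed points in its two coordinates; the point
stabilizers `A` and `B` are Gassmann equivalent of index 13, but not conjugate. -/
theorem fixed_gassmann_not_conjugate :
    (∀ p ∈ G₀, Nat.card {x : Fin 13 // p.1 x = x} = Nat.card {x : Fin 13 // p.2 x = x}) ∧
    (∀ g : G₀,
      Nat.card ((A : Set G₀) ∩ {x : G₀ | IsConj g x} : Set G₀) =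
      Nat.card ((B : Set G₀) ∩ {x : G₀ | IsConj g x} : Set G₀)) ∧
    A.index = 13 ∧ B.index = 13 ∧
    ¬ ∃ x : G₀, Subgroup.map (MulAut.conj x).toMonoidHom A = B := by
  have hA : ∀ x, x ∈ A ↔ act1 x 0 = 0 := fun _ => Iff.rfl
  have hB : ∀ x, x ∈ B ↔ act2 x 0 = 0 := fun _ => Iff.rfl
  refine ⟨?_, ?_, index_13 act1 A hA trans1, index_13 act2 B hB trans2, ?_⟩
  · intro p hp
    simpa only [Nat.card_eq_fintype_card] using fix_eq p hp
  · intro c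
    have : Fintype G₀ := Fintype.ofFinite _
    exact class_eq act1 act2 trans1 trans2 (fun x => fix_eq x.1 x.2) A B hA hB c
  · rintro ⟨x, hx⟩
    have key : ∀ a : G₀, act1 a 0 = 0 → act2 a (act2 x⁻¹ 0) = act2 x⁻¹ 0 := by
      intro a ha
      have : x * a * x⁻¹ ∈ B := by
        rw [← hx]
        exact Subgroup.mem_map_of_mem (MulAut.conj x).toMonoidHom ((hA a).2 ha)
      rw [hB, map_mul, map_mul, Perm.mul_apply, Perm.mul_apply] at this
      rw [map_inv] at this ⊢
      exact (Perm.eq_inv_iff_eq).2 this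
    exact no_common_fix _ (key _ word1) (key _ word2)
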